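/- Let k ≥ 2 be an integer, let 0 < ξ ≤ 1 be a constant, let G be a ξ-expanding k-graph on n vertices with average vertex degree d = d(G), and let j ∈ ℕ. If n^{1/(2j)} ≤ d ≤ (nk)^{1/(2j)}, then, setting β = max(⌈(n/d^{2j}) · log n⌉, ⌈(k/d^j) · log n⌉), the cop number of G satisfies c(G) ≤ 20 · ξ^{-2} · (d^j/k) · β. -/

import Mathlib

open scoped BigOperators

/-- A `k`-uniform hypergraph on vertex set `Fin n`. -/
structure KGraph (n k : ℕ) where
  edges : Finset (Finset (Fin n))
  uniform : ∀ e ∈ edges, e.card = k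

namespace KGraph

variable {n k : ℕ}

/-- A loose path of edges from `x` to `y`: a nonempty list of edges, the first containing `x`,
the last containing `y`, with consecutive edges intersecting. -/
def IsLoosePath (G : KGraph n k) (x y : Fin n) (l : List (Finset (Fin n))) : Prop :=
  l ≠ [] ∧ (∀ e ∈ l, e ∈ G.edges) ∧ (∀ e ∈ l.head?, x ∈ e) ∧
    (∀ e ∈ l.getLast?, y ∈ e) ∧ l.Chain' (fun e f => (e ∩ f).Nonempty)

/-- Distance between two vertices: the smallest length of a loose path between them
(`0` if they are equal, `⊤` if there is no such path). -/
noncomputable def dist (G : KGraph n k) (x y : Fin n) : ℕ∞ :=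
  if x = y then 0
  else sInf ((fun l : List (Finset (Fin n)) => (l.length : ℕ∞)) '' {l | G.IsLoosePath x y l})

/-- Distance between two sets of vertices: the minimum over pairs. -/
noncomputable def setDist (G : KGraph n k) (A B : Set (Fin n)) : ℕ∞ :=
  ⨅ (x ∈ A) (y ∈ B), G.dist x y

/-- The closed `r`-th vertex-neighbourhood of a set of vertices. -/
noncomputable def vNhd (G : KGraph n k) (A : Set (Fin n)) (r : ℕ) : Set (Fin n) :=
  {v | G.setDist A {v} ≤ (r : ℕ∞)}

/-- The set of vertices covered by a set of edges. -/
def VB (B : Set (Finset (Fin n))) : Set (Fin n) :=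
  ⋃ e ∈ B, (e : Set (Fin n))

/-- The closed `r`-th vertex-neighbourhood of a set of edges. -/
noncomputable def vNhdE (G : KGraph n k) (B : Set (Finset (Fin n))) (r : ℕ) : Set (Fin n) :=
  G.vNhd (VB B) r

/-- The closed `r`-th edge-neighbourhood of a set of vertices: edges within distance `r - 1`. -/
noncomputable def eNhd (G : KGraph n k) (A : Set (Fin n)) (r : ℕ) : Set (Finset (Fin n)) :=
  {e | e ∈ G.edges ∧ G.setDist (e : Set (Fin n)) A ≤ ((r - 1 : ℕ) : ℕ∞)}

/-- The average vertex degree of `G`. -/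
noncomputable def avgDeg (G : KGraph n k) : ℝ :=
  (∑ v : Fin n, ((G.vNhd {v} 1).ncard : ℝ)) / n

/-- A `k`-graph on `n` vertices with average vertex degree `d ≥ k` is `ξ`-expanding if
(A.1) edge-neighbourhoods of vertices are not too large, (A.2) vertex-neighbourhoods of vertex
sets have size comparable to `|A| d^r`, and (A.3) vertex-neighbourhoods of edge sets are large. -/
def IsExpanding (G : KGraph n k) (ξ : ℝ) : Prop :=
  (k : ℝ) ≤ G.avgDeg ∧
  (∀ v : Fin n, ∀ r : ℕ, 1 ≤ r → G.avgDeg ^ r ≤ Real.sqrt ((n : ℝ) * k) →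
    ((G.eNhd {v} r).ncard : ℝ) ≤ ξ⁻¹ * G.avgDeg ^ r / k) ∧
  (∀ A : Set (Fin n), ∀ r : ℕ, 1 ≤ r →
    ξ * min ((A.ncard : ℝ) * G.avgDeg ^ r) (n : ℝ) ≤ ((G.vNhd A r).ncard : ℝ) ∧
    ((G.vNhd A r).ncard : ℝ) ≤ ξ⁻¹ * (A.ncard : ℝ) * G.avgDeg ^ r) ∧
  (∀ B : Set (Finset (Fin n)), B ⊆ (G.edges : Set (Finset (Fin n))) → ∀ r : ℕ, 1 ≤ r →
    ξ * min ((B.ncard : ℝ) * k * G.avgDeg ^ r) (n : ℝ) ≤ ((G.vNhdE B r).ncard : ℝ))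

/-- `CopsWin G c r` : with the cops currently on the vertices `c i`, the robber on `r`, and the
cops to move, the cops have a strategy to catch the robber. Either a cop is already on the
robber's vertex; or the cops can move (each by distance at most 1) so that a cop lands on the
robber; or the cops can move so that whatever the robber's reply, the cops still win. -/
inductive CopsWin (G : KGraph n k) {m : ℕ} : (Fin m → Fin n) → Fin n → Prop
  | caught (c : Fin m → Fin n) (r : Fin n) (i : Fin m) (h : c i = r) : CopsWin G c r
  | stepCaught (c c' : Fin m → Fin n) (r : Fin n)
      (hmove : ∀ i, G.dist (c i) (c' i) ≤ 1) (i : Fin m) (h : c' i = r) : CopsWin G c r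
  | step (c c' : Fin m → Fin n) (r : Fin n)
      (hmove : ∀ i, G.dist (c i) (c' i) ≤ 1)
      (h : ∀ r' : Fin n, G.dist r r' ≤ 1 → CopsWin G c' r') : CopsWin G c r

/-- The cop number of `G` : the least `m` such that `m` cops can be initially placed so as to
catch the robber wherever he starts. -/
noncomputable def copNumber (G : KGraph n k) : ℕ :=
  sInf {m : ℕ | ∃ c₀ : Fin m → Fin n, ∀ r₀ : Fin n, CopsWin G c₀ r₀}

/-- `G` is connected if all pairs of vertices are at finite distance. -/
def Connected (G : KGraph n k) : Prop := ∀ x y : Fin n, G.dist x y ≠ ⊤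

end KGraph

open Classical in
/-- The probability that the binomial random `k`-uniform hypergraph `G^k(n,p)` (each `k`-subset
of `[n]` an edge independently with probability `p`) satisfies the property `Q`. -/
noncomputable def ghProb (n k : ℕ) (p : ℝ) (Q : KGraph n k → Prop) : ℝ :=
  ∑ E ∈ (Finset.powersetCard k (Finset.univ : Finset (Fin n))).powerset,
    if h : ∀ e ∈ E, e.card = k then
      (if Q ⟨E, h⟩ then
        p ^ E.card * (1 - p) ^ ((Finset.powersetCard k (Finset.univ : Finset (Fin n))).card - E.card)
      else 0)
    else 0


namespace CopAux
open KGraph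

variable {n k : ℕ}

lemma dist_le_iff (G : KGraph n k) (x y : Fin n) (s : ℕ) :
    G.dist x y ≤ (s : ℕ∞) ↔ x = y ∨ ∃ l, G.IsLoosePath x y l ∧ l.length ≤ s := by
  unfold KGraph.dist
  split_ifs with h
  · simp [h]
  · simp only [h, false_or]
    constructor
    · intro hs
      set S := ((fun l : List (Finset (Fin n)) => (l.length : ℕ∞)) '' {l | G.IsLoosePath x y l}) with hS
      have hne : S.Nonempty := by
        by_contra hcon
        rw [Set.not_nonempty_iff_eq_empty] at hcon
        rw [hcon] at hs
        simp at hs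
      obtain ⟨l, hl, hl2⟩ := csInf_mem hne
      rw [← hl2] at hs
      have hs' : ((l.length : ℕ) : ℕ∞) ≤ (s : ℕ∞) := hs
      exact ⟨l, hl, by exact_mod_cast hs'⟩
    · rintro ⟨l, hl, hls⟩
      have hs' : ((l.length : ℕ) : ℕ∞) ≤ (s : ℕ∞) := by exact_mod_cast hls
      exact le_trans (sInf_le ⟨l, hl, rfl⟩) hs'

lemma path_symm (G : KGraph n k) (x y : Fin n) (l) (h : G.IsLoosePath x y l) :
    G.IsLoosePath y x l.reverse := by
  obtain ⟨h1, h2, h3, h4, h5⟩ := h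
  refine ⟨by simpa using h1, by simpa using h2, by simpa using h4, by simpa using h3, ?_⟩
  unfold List.Chain' at *
  rw [List.isChain_reverse]
  refine h5.imp ?_
  intro a b hab
  rwa [Finset.inter_comm]

lemma dist_symm_le (G : KGraph n k) (x y : Fin n) (s : ℕ) (h : G.dist x y ≤ (s : ℕ∞)) :
    G.dist y x ≤ (s : ℕ∞) := by
  rw [dist_le_iff] at h ⊢
  rcases h with h | ⟨l, hl, hs⟩
  · exact Or.inl h.symm
  · exact Or.inr ⟨l.reverse, path_symm G x y l hl, by simpa using hs⟩

lemma dist_edge (G : KGraph n k) (x y : Fin n) (e) (he : e ∈ G.edges) (hx : x ∈ e) (hy : y ∈ e) :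
    G.dist x y ≤ 1 := by
  have := (dist_le_iff G x y 1).2 (Or.inr ⟨[e], ⟨by simp, by simpa using he, by simpa using hx,
    by simpa using hy, by simp [List.Chain']⟩, by simp⟩)
  exact_mod_cast this

lemma dist_split (G : KGraph n k) (x y : Fin n) (s : ℕ) (hne : x ≠ y)
    (h : G.dist x y ≤ ((s + 1 : ℕ) : ℕ∞)) :
    ∃ e ∈ G.edges, x ∈ e ∧ ∃ z ∈ e, G.dist z y ≤ (s : ℕ∞) := by
  rw [dist_le_iff] at h
  rcases h with h | ⟨l, ⟨h1, h2, h3, h4, h5⟩, hs⟩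
  · exact absurd h hne
  match l, h1, h2, h3, h4, h5, hs with
  | [e], h1, h2, h3, h4, h5, hs =>
    refine ⟨e, by simpa using h2, by simpa using h3, y, by simpa using h4, ?_⟩
    exact (dist_le_iff G y y s).2 (Or.inl rfl)
  | e :: f :: l, h1, h2, h3, h4, h5, hs =>
    unfold List.Chain' at h5
    rw [List.isChain_cons_cons] at h5
    obtain ⟨⟨z, hz⟩, h5⟩ := h5
    rw [Finset.mem_inter] at hz
    refine ⟨e, h2 e (by simp), by simpa using h3, z, hz.1, ?_⟩
    refine (dist_le_iff G z y s).2 (Or.inr ⟨f :: l, ⟨by simp, fun g hg => h2 g (by simp at hg ⊢; tauto), 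
      by simpa using hz.2, ?_, h5⟩, by simpa using hs⟩)
    simpa using h4

lemma dist_split' (G : KGraph n k) (x y : Fin n) (s : ℕ)
    (h : G.dist x y ≤ ((s + 1 : ℕ) : ℕ∞)) :
    ∃ z, G.dist x z ≤ 1 ∧ G.dist z y ≤ (s : ℕ∞) := by
  by_cases hne : x = y
  · subst hne
    exact ⟨x, by simp [KGraph.dist], by simp [KGraph.dist]⟩
  · obtain ⟨e, he, hx, z, hz, hzy⟩ := dist_split G x y s hne h
    exact ⟨z, dist_edge G x z e he hx hz, hzy⟩

lemma dist_cons (G : KGraph n k) (x z y : Fin n) (s : ℕ) (h1 : G.dist x z ≤ 1)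
    (h2 : G.dist z y ≤ (s : ℕ∞)) : G.dist x y ≤ ((s + 1 : ℕ) : ℕ∞) := by
  have h1' : G.dist x z ≤ ((0 + 1 : ℕ) : ℕ∞) := by simpa using h1
  by_cases hxz : x = z
  · subst hxz
    exact h2.trans (by exact_mod_cast Nat.le_succ s)
  obtain ⟨e, he, hx, z', hz', hz'z⟩ := dist_split G x z 0 hxz h1'
  have : z' = z := by
    by_contra hcon
    rw [dist_le_iff] at hz'z
    rcases hz'z with h | ⟨l, hl, hl0⟩
    · exact hcon h
    · exact hl.1 (List.length_eq_zero_iff.1 (by omega))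
  subst this
  rw [dist_le_iff] at h2
  rcases h2 with h2 | ⟨l, ⟨p1, p2, p3, p4, p5⟩, hl⟩
  · subst h2
    exact (dist_edge G x z' e he hx hz').trans (by exact_mod_cast Nat.succ_le_succ (Nat.zero_le s))
  · refine (dist_le_iff _ _ _ _).2 (Or.inr ⟨e :: l, ⟨by simp, ?_, by simpa using hx, ?_, ?_⟩, by simpa using hl⟩)
    · intro g hg
      rcases List.mem_cons.1 hg with rfl | hg
      · exact he
      · exact p2 g hg
    · match l, p1, p4 with
      | f :: l, _, p4 => simpa using p4
    · match l, p1, p3, p5 with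
      | f :: l, _, p3, p5 =>
        unfold List.Chain' at *
        rw [List.isChain_cons_cons]
        exact ⟨⟨z', Finset.mem_inter.2 ⟨hz', by simpa using p3⟩⟩, p5⟩

lemma setDist_le_iff (G : KGraph n k) (A B : Set (Fin n)) (s : ℕ) :
    G.setDist A B ≤ (s : ℕ∞) ↔ ∃ x ∈ A, ∃ y ∈ B, G.dist x y ≤ (s : ℕ∞) := by
  unfold KGraph.setDist
  constructor
  · intro h
    by_contra! hcon
    have : ((s + 1 : ℕ) : ℕ∞) ≤ ⨅ (x ∈ A) (y ∈ B), G.dist x y := by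
      refine le_iInf₂ fun x hx => le_iInf₂ fun y hy => ?_
      have := Order.add_one_le_of_lt (hcon x hx y hy)
      exact_mod_cast this
    have h2 := this.trans h
    have : s + 1 ≤ s := by exact_mod_cast h2
    omega
  · rintro ⟨x, hx, y, hy, h⟩
    exact (iInf₂_le_of_le x hx (iInf₂_le y hy)).trans h

lemma mem_vNhd (G : KGraph n k) (A : Set (Fin n)) (s : ℕ) (v : Fin n) :
    v ∈ G.vNhd A s ↔ ∃ x ∈ A, G.dist x v ≤ (s : ℕ∞) := by
  simp [KGraph.vNhd, setDist_le_iff]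

lemma mem_vNhdE (G : KGraph n k) (B : Set (Finset (Fin n))) (s : ℕ) (v : Fin n) :
    v ∈ G.vNhdE B s ↔ ∃ e ∈ B, ∃ x ∈ e, G.dist x v ≤ (s : ℕ∞) := by
  simp only [KGraph.vNhdE, mem_vNhd, KGraph.VB, Set.mem_iUnion]
  constructor
  · rintro ⟨x, ⟨e, he, hx⟩, h⟩
    exact ⟨e, he, x, hx, h⟩
  · rintro ⟨e, he, x, hx, h⟩
    exact ⟨x, ⟨e, he, hx⟩, h⟩

lemma copsWin_of_target (G : KGraph n k) {m : ℕ} (t : Fin m → Fin n) (s : ℕ) :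
    ∀ (c : Fin m → Fin n) (r : Fin n), (∀ i, G.dist (c i) (t i) ≤ (s : ℕ∞)) →
      (∀ r', G.dist r r' ≤ (s : ℕ∞) → ∃ i, G.dist (t i) r' ≤ 1) → CopsWin G c r := by
  classical
  induction s with
  | zero =>
    intro c r hc hr
    have hct : c = t := by
      funext i
      have := hc i
      rw [dist_le_iff] at this
      rcases this with h | ⟨l, hl, hl0⟩
      · exact h
      · exact absurd (List.length_eq_zero_iff.1 (by omega)) hl.1
    subst hct
    obtain ⟨i, hi⟩ := hr r (by simp [KGraph.dist])
    refine CopsWin.stepCaught c (Function.update c i r) r ?_ i (by simp)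
    intro i'
    by_cases h : i' = i
    · subst h; simpa using hi
    · simp [h, KGraph.dist]
  | succ s ih =>
    intro c r hc hr
    choose c' h1 h2 using fun i => dist_split' G (c i) (t i) s (hc i)
    refine CopsWin.step c c' r h1 fun r' hr' => ih c' r' h2 fun r'' hr'' => ?_
    exact hr r'' (dist_cons G r r' r'' s hr' hr'')

lemma copsWin_of_hall (G : KGraph n k) {m : ℕ} (j : ℕ) (hj : 1 ≤ j) (c : Fin m → Fin n) (v : Fin n)
    (hv : ∃ e ∈ G.edges, v ∈ e) (F : Finset (Finset (Fin n)))
    (hF : ∀ e, e ∈ F ↔ e ∈ G.eNhd {v} j)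
    (N : Finset (Finset (Fin n)) → Finset (Fin n))
    (hN : ∀ B x, x ∈ N B ↔ x ∈ G.vNhdE (B : Set (Finset (Fin n))) j)
    (h : ∀ B, B ⊆ F → B.card ≤ (Finset.univ.filter fun i => c i ∈ N B).card) :
    CopsWin G c v := by
  classical
  let T : F → Finset (Fin m) := fun e => Finset.univ.filter fun i => c i ∈ N {e.1}
  obtain ⟨f, hf, hfT⟩ := (Finset.all_card_le_biUnion_card_iff_exists_injective T).1 (by
    intro s
    have h1 := h (s.map (Function.Embedding.subtype _)) (by
      intro e he
      simp only [Finset.mem_map, Function.Embedding.coe_subtype] at he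
      obtain ⟨a, _, rfl⟩ := he
      exact a.2)
    rw [Finset.card_map] at h1
    refine h1.trans (Finset.card_le_card ?_)
    intro i hi
    simp only [Finset.mem_filter, Finset.mem_univ, true_and, hN, mem_vNhdE] at hi
    obtain ⟨e, he, x, hx, hd⟩ := hi
    simp only [Finset.coe_map, Set.mem_image, Finset.mem_coe] at he
    obtain ⟨a, ha, rfl⟩ := he
    simp only [Finset.mem_biUnion, T, Finset.mem_filter, Finset.mem_univ, true_and, hN, mem_vNhdE]
    exact ⟨a, ha, a.1, by simp, x, hx, hd⟩)
  have hx : ∀ e : F, ∃ x ∈ e.1, G.dist (c (f e)) x ≤ (j : ℕ∞) := by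
    intro e
    have := hfT e
    simp only [T, Finset.mem_filter, Finset.mem_univ, true_and, hN, mem_vNhdE] at this
    obtain ⟨e', he', x, hx, hd⟩ := this
    simp at he'
    subst he'
    exact ⟨x, hx, dist_symm_le G _ _ _ hd⟩
  choose g hg hgd using hx
  let t : Fin m → Fin n := fun i => if hi : ∃ e, f e = i then g hi.choose else c i
  have ht : ∀ e, t (f e) = g e := by
    intro e
    have hi : ∃ e', f e' = f e := ⟨e, rfl⟩
    simp only [t, dif_pos hi]
    rw [hf hi.choose_spec]
  refine copsWin_of_target G t j c v ?_ ?_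
  · intro i
    by_cases hi : ∃ e, f e = i
    · obtain ⟨e, rfl⟩ := hi
      rw [ht]; exact hgd e
    · have hti : t i = c i := dif_neg hi
      rw [hti]
      simp [KGraph.dist]
  · intro r hr
    have : ∃ e ∈ F, r ∈ e := by
      by_cases hvr : v = r
      · subst hvr
        obtain ⟨e, he, hve⟩ := hv
        refine ⟨e, (hF e).2 ⟨he, ?_⟩, hve⟩
        rw [setDist_le_iff]
        exact ⟨v, hve, v, rfl, by simp [KGraph.dist]⟩
      · have h1 := dist_symm_le G _ _ _ hr
        obtain ⟨j', rfl⟩ : ∃ j', j = j' + 1 := ⟨j - 1, by omega⟩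
        obtain ⟨e, he, hre, z, hz, hzv⟩ := dist_split G r v j' (Ne.symm hvr) h1
        refine ⟨e, (hF e).2 ⟨he, ?_⟩, hre⟩
        rw [setDist_le_iff]
        exact ⟨z, hz, v, rfl, by simpa using hzv⟩
    obtain ⟨e, he, hre⟩ := this
    refine ⟨f ⟨e, he⟩, ?_⟩
    rw [ht]
    have heG := ((hF e).1 he).1
    exact dist_edge G _ _ e heG (hg ⟨e, he⟩) hre

/-- Chernoff type bound by counting. -/
lemma chernoff (m : ℕ) (hn : 0 < n) (S : Finset (Fin n)) (b : ℕ) :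
    ((Finset.univ.filter fun c : Fin m → Fin n =>
      (Finset.univ.filter fun i => c i ∈ S).card < b).card : ℝ) ≤
      4 ^ b * Real.exp (-(3 / 4 * (m * S.card / n))) * n ^ m := by
  classical
  have hn' : (0 : ℝ) < n := by exact_mod_cast hn
  let f : Fin n → ℝ := fun x => if x ∈ S then 1 / 4 else 1
  have hf0 : ∀ x, 0 ≤ f x := by intro x; simp only [f]; split_ifs <;> norm_num
  have hprod : ∀ c : Fin m → Fin n,
      ∏ i, f (c i) = (1 / 4 : ℝ) ^ (Finset.univ.filter fun i => c i ∈ S).card := by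
    intro c
    simp only [f]
    rw [Finset.prod_ite]
    simp
  have hsum : ∑ x, f x = n - 3 / 4 * S.card := by
    have h1 : ∀ x, f x = 1 - 3 / 4 * (if x ∈ S then 1 else 0) := by
      intro x; simp only [f]; split_ifs <;> norm_num
    simp only [h1, Finset.sum_sub_distrib, ← Finset.mul_sum]
    simp
  have hpow := Fintype.sum_pow f m
  have hS : (S.card : ℝ) ≤ n := by
    have := Finset.card_le_univ S
    simp at this
    exact_mod_cast this
  have hub : (∑ x, f x) ^ m ≤ Real.exp (-(3 / 4 * (m * S.card / n))) * n ^ m := by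
    have h1 : ∑ x, f x = n * (1 - 3 / 4 * (S.card / n)) := by
      rw [hsum]; field_simp
    have h2 : (1 - 3 / 4 * (S.card / n) : ℝ) ≤ Real.exp (-(3 / 4 * (S.card / n))) := by
      have := Real.add_one_le_exp (-(3 / 4 * (S.card / n : ℝ)))
      linarith
    have h3 : (0 : ℝ) ≤ 1 - 3 / 4 * (S.card / n) := by
      have : (S.card / n : ℝ) ≤ 1 := by rw [div_le_one hn']; exact hS
      linarith
    rw [h1, mul_pow, mul_comm]
    gcongr
    calc _ ≤ (Real.exp (-(3 / 4 * (S.card / n)))) ^ m := by gcongr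
      _ = _ := by rw [← Real.exp_nat_mul]; congr 1; ring
  have hlow : ((Finset.univ.filter fun c : Fin m → Fin n =>
      (Finset.univ.filter fun i => c i ∈ S).card < b).card : ℝ) * (1 / 4) ^ b ≤ (∑ x, f x) ^ m := by
    rw [hpow, ← nsmul_eq_mul, ← Finset.sum_const]
    refine (Finset.sum_le_sum (g := fun c : Fin m → Fin n => ∏ i, f (c i)) ?_).trans
      (Finset.sum_le_sum_of_subset_of_nonneg (Finset.subset_univ _) ?_)
    · intro c hc
      rw [hprod]
      simp only [Finset.mem_filter, Finset.mem_univ, true_and] at hc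
      exact pow_le_pow_of_le_one (by norm_num) (by norm_num) hc.le
    · intro c _ _
      exact Finset.prod_nonneg fun i _ => hf0 _
  have h4 : ((1 : ℝ) / 4) ^ b * 4 ^ b = 1 := by rw [← mul_pow]; norm_num
  calc _ = ((Finset.univ.filter fun c : Fin m → Fin n =>
      (Finset.univ.filter fun i => c i ∈ S).card < b).card : ℝ) * (1 / 4) ^ b * 4 ^ b := by
        rw [mul_assoc, h4, mul_one]
    _ ≤ Real.exp (-(3 / 4 * (m * S.card / n))) * n ^ m * 4 ^ b := by
        exact mul_le_mul_of_nonneg_right (hlow.trans hub) (by positivity)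
    _ = _ := by ring

lemma exists_cops (m : ℕ) (hn : 2 ≤ n) (F : Fin n → Finset (Finset (Fin n)))
    (N : Finset (Finset (Fin n)) → Finset (Fin n))
    (hE : ∀ v, (F v).card ≤ n)
    (hP : ∀ v, ∀ B ⊆ F v, B.Nonempty →
      (4 : ℝ) ^ B.card * Real.exp (-(3 / 4 * (m * (N B).card / n))) ≤
        ((n : ℝ)⁻¹) ^ 4 * (((n : ℝ)⁻¹) ^ B.card + (1 / 2) ^ (F v).card)) :
    ∃ c : Fin m → Fin n, ∀ v, ∀ B ⊆ F v,
      B.card ≤ (Finset.univ.filter fun i => c i ∈ N B).card := by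
  classical
  by_contra! hcon
  have hn' : (2 : ℝ) ≤ n := by exact_mod_cast hn
  have hn0 : (0 : ℝ) < n := by linarith
  let bad : Finset (Finset (Fin n)) → Finset (Fin m → Fin n) := fun B =>
    Finset.univ.filter fun c : Fin m → Fin n =>
      (Finset.univ.filter fun i => c i ∈ N B).card < B.card
  have hcov : (Finset.univ : Finset (Fin m → Fin n)) ⊆
      Finset.univ.biUnion fun v => (F v).powerset.biUnion fun B => bad B := by
    intro c _
    obtain ⟨v, B, hB, hlt⟩ := hcon c
    simp only [Finset.mem_biUnion, Finset.mem_univ, true_and, Finset.mem_powerset]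
    exact ⟨v, B, hB, by simpa [bad] using hlt⟩
  have hbad : ∀ v, ∀ B ∈ (F v).powerset, ((bad B).card : ℝ) ≤
      ((n : ℝ)⁻¹) ^ 4 * (((n : ℝ)⁻¹) ^ B.card + (1 / 2) ^ (F v).card) * n ^ m := by
    intro v B hB
    rcases B.eq_empty_or_nonempty with rfl | hne
    · simp only [bad, Finset.card_empty, not_lt_zero, Finset.filter_false, Nat.cast_zero]
      positivity
    · refine (chernoff m (by omega) (N B) B.card).trans ?_
      exact mul_le_mul_of_nonneg_right (hP v B (Finset.mem_powerset.1 hB) hne) (by positivity)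
  have hsumB : ∀ v, ∑ B ∈ (F v).powerset, ((bad B).card : ℝ) ≤ ((n : ℝ)⁻¹) ^ 4 * 4 * n ^ m := by
    intro v
    refine (Finset.sum_le_sum (hbad v)).trans ?_
    rw [← Finset.sum_mul, ← Finset.mul_sum, Finset.sum_add_distrib]
    have h1 : ∑ B ∈ (F v).powerset, ((n : ℝ)⁻¹) ^ B.card = ((n : ℝ)⁻¹ + 1) ^ (F v).card := by
      have := Finset.sum_pow_mul_eq_add_pow ((n : ℝ)⁻¹) 1 (F v)
      simpa using this
    have h2 : ∑ B ∈ (F v).powerset, ((1 : ℝ) / 2) ^ (F v).card = 1 := by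
      rw [Finset.sum_const, Finset.card_powerset, nsmul_eq_mul]
      push_cast
      rw [← mul_pow]; norm_num
    have h3 : ((n : ℝ)⁻¹ + 1) ^ (F v).card ≤ 3 := by
      calc ((n : ℝ)⁻¹ + 1) ^ (F v).card ≤ ((n : ℝ)⁻¹ + 1) ^ n := by
            apply pow_le_pow_right₀ _ (hE v)
            have : 0 < (n : ℝ)⁻¹ := by positivity
            linarith
        _ ≤ (Real.exp ((n : ℝ)⁻¹)) ^ n := by
            gcongr; exact Real.add_one_le_exp _
        _ = Real.exp 1 := by
            rw [← Real.exp_nat_mul]; congr 1; field_simp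
        _ ≤ 3 := by linarith [Real.exp_one_lt_d9]
    rw [h1, h2]
    gcongr
    linarith
  have htot : ((n : ℝ) ^ m) ≤ n * (((n : ℝ)⁻¹) ^ 4 * 4 * n ^ m) := by
    have h1 := (Finset.card_le_card hcov).trans Finset.card_biUnion_le
    have h2 : (Fintype.card (Fin m → Fin n)) ≤
        ∑ v : Fin n, ∑ B ∈ (F v).powerset, (bad B).card := by
      refine h1.trans (Finset.sum_le_sum fun v _ => Finset.card_biUnion_le)
    have h3 : ((n : ℝ) ^ m) ≤ ∑ v : Fin n, ∑ B ∈ (F v).powerset, ((bad B).card : ℝ) := by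
      have : ((Fintype.card (Fin m → Fin n) : ℕ) : ℝ) = (n : ℝ) ^ m := by simp
      rw [← this]
      exact_mod_cast h2
    refine h3.trans ((Finset.sum_le_sum fun v _ => hsumB v).trans ?_)
    simp
  have hpos : (0 : ℝ) < n ^ m := by positivity
  have h5 : (n : ℝ) * (((n : ℝ)⁻¹) ^ 4 * 4 * n ^ m) = 4 / n ^ 3 * n ^ m := by
    field_simp
  rw [h5] at htot
  have h6 : (4 : ℝ) / n ^ 3 < 1 := by
    rw [div_lt_one (by positivity)]
    nlinarith [pow_le_pow_left₀ (by norm_num) hn' 3]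
  nlinarith

end CopAux

namespace CopAux
open KGraph

variable {n k : ℕ}

lemma four_pow_le (b : ℕ) : (4 : ℝ) ^ b ≤ Real.exp (2 * b) := by
  have h : (4 : ℝ) ≤ Real.exp 2 := by
    have h1 := Real.exp_one_gt_d9
    have h2 : Real.exp 2 = Real.exp 1 * Real.exp 1 := by rw [← Real.exp_add]; norm_num
    rw [h2]; nlinarith
  calc (4 : ℝ) ^ b ≤ (Real.exp 2) ^ b := by gcongr
    _ = _ := by rw [← Real.exp_nat_mul]; congr 1; ring

lemma inv_pow_eq (hn : 2 ≤ n) (b : ℕ) :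
    ((n : ℝ)⁻¹) ^ b = Real.exp (-(b * Real.log n)) := by
  have hn0 : (0 : ℝ) < n := by exact_mod_cast (by omega : 0 < n)
  rw [Real.exp_neg, Real.exp_nat_mul, Real.exp_log hn0, inv_pow]

lemma num1 (hn : 2 ≤ n) (μ : ℝ) (b : ℕ) (hb : 1 ≤ b) (h1 : 19 * (b : ℝ) ≤ μ)
    (h2 : 19 * (b * Real.log n) ≤ μ) :
    (4 : ℝ) ^ b * Real.exp (-(3 / 4 * μ)) ≤ ((n : ℝ)⁻¹) ^ 4 * ((n : ℝ)⁻¹) ^ b := by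
  have hL : 0 ≤ Real.log n := Real.log_natCast_nonneg n
  have hb' : (1 : ℝ) ≤ b := by exact_mod_cast hb
  rw [inv_pow_eq hn, inv_pow_eq hn, ← Real.exp_add]
  refine (mul_le_mul_of_nonneg_right (four_pow_le b) (Real.exp_pos _).le).trans ?_
  rw [← Real.exp_add, Real.exp_le_exp]
  push_cast
  nlinarith [mul_le_mul_of_nonneg_right hb' hL]

lemma num2 (hn : 2 ≤ n) (μ : ℝ) (b E : ℕ) (hb : b ≤ E) (h1 : 19 * (E : ℝ) ≤ μ)
    (h2 : 19 * (Real.log n) ≤ μ) :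
    (4 : ℝ) ^ b * Real.exp (-(3 / 4 * μ)) ≤ ((n : ℝ)⁻¹) ^ 4 * (1 / 2) ^ E := by
  have hL : 0 ≤ Real.log n := Real.log_natCast_nonneg n
  have hb' : (b : ℝ) ≤ E := by exact_mod_cast hb
  have hE : Real.exp (-(E : ℝ)) ≤ (1 / 2) ^ E := by
    have h : Real.exp (-1) ≤ 1 / 2 := by
      rw [Real.exp_neg, one_div]
      apply inv_anti₀ (by norm_num)
      linarith [Real.exp_one_gt_d9]
    calc Real.exp (-(E : ℝ)) = (Real.exp (-1)) ^ E := by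
          rw [← Real.exp_nat_mul]; congr 1; ring
      _ ≤ _ := by gcongr
  rw [inv_pow_eq hn]
  refine (mul_le_mul_of_nonneg_right (four_pow_le b) (Real.exp_pos _).le).trans ?_
  refine le_trans ?_ (mul_le_mul_of_nonneg_left hE (Real.exp_pos _).le)
  rw [← Real.exp_add, ← Real.exp_add, Real.exp_le_exp]
  push_cast
  have : (0 : ℝ) ≤ b := by positivity
  nlinarith

lemma copNumber_le_n (G : KGraph n k) : G.copNumber ≤ n :=
  Nat.sInf_le ⟨id, fun r => CopsWin.caught _ _ r rfl⟩

lemma avgDeg_le (G : KGraph n k) : G.avgDeg ≤ n := by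
  unfold KGraph.avgDeg
  rcases Nat.eq_zero_or_pos n with h | h
  · subst h; simp
  · have hn' : (0 : ℝ) < n := by exact_mod_cast h
    rw [div_le_iff₀ hn']
    calc _ ≤ ∑ v : Fin n, (n : ℝ) := by
          refine Finset.sum_le_sum fun v _ => ?_
          have := Set.ncard_le_ncard (Set.subset_univ (G.vNhd {v} 1)) (Set.toFinite _)
          rw [Set.ncard_univ, Nat.card_fin] at this
          exact_mod_cast this
      _ = _ := by simp

lemma isolated_nhd (G : KGraph n k) (v : Fin n) (hv : ¬ ∃ e ∈ G.edges, v ∈ e) (r : ℕ) :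
    (G.vNhd {v} r).ncard ≤ 1 := by
  have : G.vNhd {v} r ⊆ {v} := by
    intro y hy
    rw [mem_vNhd] at hy
    obtain ⟨x, hx, hd⟩ := hy
    rw [Set.mem_singleton_iff] at hx ⊢
    subst hx
    by_contra hne
    have h2 : G.dist x y ≤ ((r + 1 : ℕ) : ℕ∞) := hd.trans (by exact_mod_cast Nat.le_succ r)
    obtain ⟨e, he, hx, _⟩ := dist_split G x y r (Ne.symm hne) h2
    exact hv ⟨e, he, hx⟩
  simpa using Set.ncard_le_ncard this (Set.toFinite _)

lemma key1 (x ξ q D k β b n m s : ℝ) (hxx : ξ * x = 1) (hi : 1 ≤ x) (hqk : q * k = D)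
    (hn : 0 < n) (hβ : 0 ≤ β) (hq : 0 ≤ q) (hb : 1 ≤ b) (hs : ξ * (b * k * D) ≤ s)
    (hm : 19 * (x ^ 2 * q * β) ≤ m) : 19 * (b * (D ^ 2 * β / n)) ≤ m * s / n := by
  have hx : 0 ≤ x := by linarith
  have hT : 0 ≤ 19 * (b * (D ^ 2 * β)) := by positivity
  have h0 : 19 * (x ^ 2 * q * β) * (ξ * (b * k * D)) = x * (19 * (b * (D ^ 2 * β))) := by
    rw [← hqk]
    linear_combination (19 * x * q * β * b * k * (q * k)) * hxx
  have hξ : 0 ≤ ξ := by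
    by_contra h
    nlinarith
  have hkk : 0 ≤ ξ * (b * k * D) := by
    have : ξ * (b * k * D) = ξ * b * (q * k ^ 2) := by rw [← hqk]; ring
    rw [this]; positivity
  have h1 : 19 * (x ^ 2 * q * β) * (ξ * (b * k * D)) ≤ m * s :=
    mul_le_mul hm hs hkk (le_trans (by positivity) hm)
  have h2 : 19 * (b * (D ^ 2 * β)) ≤ x * (19 * (b * (D ^ 2 * β))) := le_mul_of_one_le_left hT hi
  have h3 : 19 * (b * (D ^ 2 * β / n)) = 19 * (b * (D ^ 2 * β)) / n := by ring
  rw [h3]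
  exact div_le_div_of_nonneg_right (by linarith) hn.le

lemma key2 (x ξ q β n m s : ℝ) (hxx : ξ * x = 1) (hi : 1 ≤ x)
    (hn : 0 < n) (hβ : 0 ≤ β) (hq : 0 ≤ q) (hs : ξ * n ≤ s)
    (hm : 19 * (x ^ 2 * q * β) ≤ m) : 19 * (x * q * β) ≤ m * s / n := by
  have hx : 0 ≤ x := by linarith
  have hξ : 0 ≤ ξ := by
    by_contra h
    nlinarith
  rw [le_div_iff₀ hn]
  have h1 : 19 * (x ^ 2 * q * β) * (ξ * n) ≤ m * s :=
    mul_le_mul hm hs (by positivity) (le_trans (by positivity) hm)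
  have h0 : 19 * (x ^ 2 * q * β) * (ξ * n) = 19 * (x * q * β) * n := by
    linear_combination (19 * x * q * β * n) * hxx
  linarith

set_option maxHeartbeats 1000000 in
lemma main_bound (hn : 2 ≤ n) (hk : 2 ≤ k) (ξ : ℝ) (hξ0 : 0 < ξ) (hξ1 : ξ ≤ 1)
    (G : KGraph n k) (hG : G.IsExpanding ξ) (j : ℕ) (hj : 1 ≤ j) (D β : ℝ)
    (hD : D = G.avgDeg ^ j) (hDk : (k : ℝ) ≤ D) (hD1 : (n : ℝ) ≤ D ^ 2) (hD2 : D ^ 2 ≤ n * k)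
    (hβ : 1 ≤ β) (hβ1 : (n : ℝ) / D ^ 2 * Real.log n ≤ β) (hβ2 : (k : ℝ) / D * Real.log n ≤ β) :
    (G.copNumber : ℝ) ≤ 20 * ξ⁻¹ ^ 2 * (D / k) * β := by
  classical
  set M := 20 * ξ⁻¹ ^ 2 * (D / k) * β with hM
  rcases le_or_gt (n : ℝ) M with hMn | hMn
  · exact le_trans (by exact_mod_cast copNumber_le_n G) hMn
  have hn0 : (0 : ℝ) < n := by exact_mod_cast (by omega : 0 < n)
  have hk0 : (0 : ℝ) < k := by exact_mod_cast (by omega : 0 < k)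
  have hD0 : 0 < D := by linarith
  have hi : 1 ≤ ξ⁻¹ := (one_le_inv₀ hξ0).2 hξ1
  have hDk1 : 1 ≤ D / k := by rw [one_le_div hk0]; exact hDk
  have hL : 0 ≤ Real.log n := Real.log_natCast_nonneg n
  have hxx : ξ * ξ⁻¹ = 1 := mul_inv_cancel₀ hξ0.ne'
  obtain ⟨hA0, hA1, hA2, hA3⟩ := hG
  clear_value M
  generalize ξ⁻¹ = x at *
  obtain ⟨q, hq⟩ : ∃ q, q = D / k := ⟨_, rfl⟩
  rw [← hq] at hM hDk1
  have hqk : q * k = D := by rw [hq]; field_simp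
  have hqβ : 1 ≤ q * β := by nlinarith
  have hxq : x * q ≤ x ^ 2 * q * β := by
    have h1 : x * q * 1 ≤ x * q * (x * β) := by
      apply mul_le_mul_of_nonneg_left _ (by positivity)
      nlinarith
    nlinarith
  have hM20 : 20 ≤ M := by
    have h1 : 1 ≤ x ^ 2 := one_le_pow₀ hi
    have : 1 ≤ x ^ 2 * (q * β) := by nlinarith
    rw [hM]; nlinarith
  let m := ⌊M⌋₊
  have hmM : (m : ℝ) ≤ M := Nat.floor_le (by linarith)
  have hm : 19 * (x ^ 2 * q * β) ≤ m := by
    have := Nat.lt_floor_add_one M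
    have h2 : (M : ℝ) < m + 1 := this
    have h3 : M = 20 * (x ^ 2 * q * β) := by rw [hM]; ring
    linarith
  -- no isolated vertices
  have hiso : ∀ v : Fin n, ∃ e ∈ G.edges, v ∈ e := by
    intro v
    by_contra hv
    have h1 := (hA2 {v} (2 * j) (by omega)).1
    have h2 : ((G.vNhd {v} (2 * j)).ncard : ℝ) ≤ 1 := by exact_mod_cast isolated_nhd G v hv _
    have h3 : G.avgDeg ^ (2 * j) = D ^ 2 := by rw [hD, ← pow_mul, mul_comm]
    rw [h3, Set.ncard_singleton, Nat.cast_one, one_mul, min_eq_right hD1] at h1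
    have h4 : (n : ℝ) ≤ x := by
      have : ξ * n * x ≤ 1 * x := by gcongr; linarith
      nlinarith
    nlinarith
  let F : Fin n → Finset (Finset (Fin n)) := fun v => G.edges.filter fun e => e ∈ G.eNhd {v} j
  have hF : ∀ v e, e ∈ F v ↔ e ∈ G.eNhd {v} j := by
    intro v e
    simp only [F, Finset.mem_filter, and_iff_right_iff_imp]
    exact fun h => h.1
  let N : Finset (Finset (Fin n)) → Finset (Fin n) := fun B =>
    Finset.univ.filter fun y => y ∈ G.vNhdE (B : Set (Finset (Fin n))) j
  have hN : ∀ B y, y ∈ N B ↔ y ∈ G.vNhdE (B : Set (Finset (Fin n))) j := by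
    intro B y; simp [N]
  have hEq : ∀ v, ((F v).card : ℝ) ≤ x * q := by
    intro v
    have h1 := hA1 v j hj (by
      rw [← hD]
      exact Real.le_sqrt_of_sq_le hD2)
    have h2 : G.eNhd {v} j = (F v : Set (Finset (Fin n))) := by
      ext e; rw [Finset.mem_coe, hF]
    rw [h2, Set.ncard_coe_finset, ← hD] at h1
    rw [hq]
    calc _ ≤ _ := h1
      _ = _ := by ring
  have hEn : ∀ v, (F v).card ≤ n := by
    intro v
    have h1 := hEq v
    have h3 : M = 20 * (x ^ 2 * q * β) := by rw [hM]; ring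
    have h4 : 0 < x ^ 2 * q * β := by positivity
    have : ((F v).card : ℝ) ≤ n := by linarith
    exact_mod_cast this
  clear_value m F N
  obtain ⟨c, hc⟩ := exists_cops m hn F N hEn (by
    intro v B hB hne
    have hb1 : 1 ≤ B.card := hne.card_pos
    have hb1' : (1 : ℝ) ≤ B.card := by exact_mod_cast hb1
    have hBE := Finset.card_le_card hB
    have h1 := hA3 (B : Set (Finset (Fin n))) (by
      intro e he
      exact ((hF v e).1 (hB he)).1) j hj
    have h2 : G.vNhdE (B : Set (Finset (Fin n))) j = (N B : Set (Fin n)) := by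
      ext y; rw [Finset.mem_coe, hN]
    rw [h2, Set.ncard_coe_finset, Set.ncard_coe_finset, ← hD] at h1
    have hs0 : (0 : ℝ) ≤ (N B).card := by positivity
    rcases le_total ((B.card : ℝ) * k * D) n with hcase | hcase
    · rw [min_eq_left hcase] at h1
      have key : 19 * (B.card * (D ^ 2 * β / n)) ≤ m * (N B).card / n := by
        exact key1 _ _ _ _ _ _ _ _ _ _ hxx hi hqk hn0 (by linarith) (by linarith) hb1'
          h1 (by linarith)
      have k1 : 1 ≤ D ^ 2 * β / n := by
        rw [one_le_div hn0]; nlinarith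
      have k2 : Real.log n ≤ D ^ 2 * β / n := by
        rw [le_div_iff₀ hn0]
        rw [div_mul_eq_mul_div, div_le_iff₀ (by positivity)] at hβ1
        linarith
      refine (num1 hn _ B.card hb1 ?_ ?_).trans ?_
      · refine le_trans ?_ key
        nlinarith
      · refine le_trans ?_ key
        gcongr
      · gcongr
        have : (0 : ℝ) ≤ (1 / 2) ^ (F v).card := by positivity
        linarith
    · rw [min_eq_right hcase] at h1
      have key : 19 * (x * q * β) ≤ m * (N B).card / n := by
        exact key2 _ _ _ _ _ _ _ hxx hi hn0 (by linarith) (by linarith) h1 (by linarith)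
      refine (num2 hn _ B.card (F v).card hBE ?_ ?_).trans ?_
      · refine le_trans ?_ key
        have := hEq v
        have h5 : x * q * 1 ≤ x * q * β := by gcongr
        linarith
      · refine le_trans ?_ key
        have h5 : Real.log n ≤ q * β := by
          rw [div_mul_eq_mul_div, div_le_iff₀ hD0] at hβ2
          rw [hq, div_mul_eq_mul_div, le_div_iff₀ hk0]
          linarith
        have h6 : q * β ≤ x * (q * β) := le_mul_of_one_le_left (by positivity) hi
        linarith
      · gcongr
        have : (0 : ℝ) ≤ ((n : ℝ)⁻¹) ^ B.card := by positivity
        linarith)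
  have hcop : G.copNumber ≤ m := Nat.sInf_le ⟨c, fun r =>
    copsWin_of_hall G j hj c r (hiso r) (F r) (hF r) N hN (hc r)⟩
  exact le_trans (by exact_mod_cast hcop) hmM

end CopAux

/-- regime (c). -/
theorem cop_number_expanding_regime_c (n k : ℕ) (hk : 2 ≤ k) (ξ : ℝ) (hξ0 : 0 < ξ) (hξ1 : ξ ≤ 1)
    (G : KGraph n k) (hG : G.IsExpanding ξ) (j : ℕ) (hj : 1 ≤ j)
    (hd1 : (n : ℝ) ^ ((1 : ℝ) / (2 * (j : ℝ))) ≤ G.avgDeg)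
    (hd2 : G.avgDeg ≤ ((n : ℝ) * k) ^ ((1 : ℝ) / (2 * (j : ℝ)))) :
    (G.copNumber : ℝ) ≤ 20 * ξ⁻¹ ^ 2 * (G.avgDeg ^ j / k) *
      ((max ⌈(n : ℝ) / G.avgDeg ^ (2 * j) * Real.log n⌉
            ⌈(k : ℝ) / G.avgDeg ^ j * Real.log n⌉ : ℤ) : ℝ) := by
  have hd0 : (k : ℝ) ≤ G.avgDeg := hG.1
  have hk2 : (2 : ℝ) ≤ k := by exact_mod_cast hk
  have hn2 : (2 : ℝ) ≤ n := (hk2.trans hd0).trans (CopAux.avgDeg_le G)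
  have hn : 2 ≤ n := by exact_mod_cast hn2
  have hj0 : (j : ℝ) ≠ 0 := by exact_mod_cast (by omega : j ≠ 0)
  have hroot : ∀ a : ℝ, 0 ≤ a → (a ^ ((1 : ℝ) / (2 * (j : ℝ)))) ^ (2 * j) = a := by
    intro a ha
    rw [← Real.rpow_natCast, ← Real.rpow_mul ha]
    push_cast
    rw [one_div, inv_mul_cancel₀ (by positivity), Real.rpow_one]
  have hpow : G.avgDeg ^ (2 * j) = (G.avgDeg ^ j) ^ 2 := by rw [← pow_mul, mul_comm]
  have hD1 : (n : ℝ) ≤ (G.avgDeg ^ j) ^ 2 := by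
    rw [← hpow]
    calc (n : ℝ) = _ := (hroot n (by positivity)).symm
      _ ≤ _ := by gcongr
  have hD2 : (G.avgDeg ^ j) ^ 2 ≤ (n : ℝ) * k := by
    rw [← hpow]
    have h0 : 0 ≤ G.avgDeg := by linarith
    calc _ ≤ _ := pow_le_pow_left₀ h0 hd2 (2 * j)
      _ = _ := hroot _ (by positivity)
  have hd1' : 1 ≤ G.avgDeg := by linarith
  have hDk : (k : ℝ) ≤ G.avgDeg ^ j :=
    hd0.trans (le_self_pow₀ hd1' (by omega))
  have hL : 0 < Real.log n := Real.log_pos (by linarith)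
  refine CopAux.main_bound hn hk ξ hξ0 hξ1 G hG j hj (G.avgDeg ^ j) _ rfl hDk hD1 hD2 ?_ ?_ ?_
  · have h1 : 0 < (n : ℝ) / G.avgDeg ^ (2 * j) * Real.log n := by positivity
    have h2 : (1 : ℤ) ≤ ⌈(n : ℝ) / G.avgDeg ^ (2 * j) * Real.log n⌉ := Int.ceil_pos.2 h1
    exact_mod_cast h2.trans (le_max_left _ _)
  · rw [← hpow]
    refine (Int.le_ceil _).trans ?_
    exact_mod_cast le_max_left _ _
  · refine (Int.le_ceil _).trans ?_
    exact_mod_cast le_max_right _ _
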